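/- Let E be a finite-dimensional real inner product space, n ≥ 1, and ω₁, …, ωₙ : E → E l-Lipschitz maps whose average ν = (1/n)·Σᵢ ωᵢ is μ-strongly monotone with 0 < μ ≤ l; let z* be the unique root of ν, σ*² = (1/n)·Σᵢ ‖ωᵢ(z*)‖², and κ = l/μ. Fix z₀ ∈ E and K ≥ 1, and assume ‖ν(z₀)‖·n^{1/2}·K ≥ e·μ. Set α = min{ μ/(5nl²), (2/(μnK))·log(‖ν(z₀)‖·n^{1/2}·K/μ) }. Then, averaging over all (n!)^K K-tuples of permutations of {1,…,n} (Random Reshuffling), the GDA-without-replacement output after K epochs satisfies (1/(n!)^K)·Σ_τ ‖z^{K+1}₀(τ) − z*‖² ≤ 2·e^{−K/(5κ²)}·‖z₀ − z*‖² + (2μ² + 8κ²σ*²·log³(‖ν(z₀)‖·n^{1/2}·K/μ)) / (μ²·n·K²). -/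

import Mathlib

open scoped RealInnerProductSpace

/-- Iterates within one epoch of GDA without replacement. -/
noncomputable def gdaStep {E : Type*} [NormedAddCommGroup E] [NormedSpace ℝ E] {n : ℕ}
    (ω : Fin n → E → E) (α : ℝ) (τ : Equiv.Perm (Fin n)) (z : E) : ℕ → E
  | 0 => z
  | i + 1 =>
    let w := gdaStep ω α τ z i
    if h : i < n then w - α • ω (τ ⟨i, h⟩) w else w

/-- Epoch iterates of GDA without replacement. -/
noncomputable def gdaEpochs {E : Type*} [NormedAddCommGroup E] [NormedSpace ℝ E] {n : ℕ}
    (ω : Fin n → E → E) (α : ℝ) (τs : ℕ → Equiv.Perm (Fin n)) (z0 : E) : ℕ → E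
  | 0 => z0
  | k + 1 => gdaStep ω α (τs k) (gdaEpochs ω α τs z0 k) n

section WithoutReplacement

open Finset

variable {E : Type*} [NormedAddCommGroup E] {n : ℕ}

/-- The index set of the first `i` positions. -/
abbrev firstIndices (n i : ℕ) : Finset (Fin n) := univ.filter fun j => (j : ℕ) < i

lemma firstIndices_succ {i : ℕ} (h : i < n) :
    firstIndices n (i + 1) = insert ⟨i, h⟩ (firstIndices n i) := by
  ext j
  simp only [mem_filter, mem_univ, true_and, mem_insert, Fin.ext_iff]
  omega

lemma card_firstIndices (i : Fin n) : (firstIndices n i).card = i := by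
  simp only [firstIndices, Fin.card_filter_val_lt]
  omega

lemma gdaStep_eq_sub_sum [NormedSpace ℝ E] (ω : Fin n → E → E) (α : ℝ)
    (τ : Equiv.Perm (Fin n)) (z : E)
    {i : ℕ} (hi : i ≤ n) :
    gdaStep ω α τ z i = z - α • ∑ j ∈ firstIndices n i, ω (τ j) (gdaStep ω α τ z j) := by
  induction i with
  | zero => simp [gdaStep, firstIndices]
  | succ i ih =>
    have h : i < n := hi
    have hs : ∑ j ∈ firstIndices n (i + 1), ω (τ j) (gdaStep ω α τ z j)
        = ω (τ ⟨i, h⟩) (gdaStep ω α τ z i)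
          + ∑ j ∈ firstIndices n i, ω (τ j) (gdaStep ω α τ z j) := by
      rw [firstIndices_succ h, sum_insert (by simp)]
    have hg : gdaStep ω α τ z (i + 1)
        = gdaStep ω α τ z i - α • ω (τ ⟨i, h⟩) (gdaStep ω α τ z i) := by
      simp [gdaStep, h]
    rw [hg, hs, smul_add]
    nth_rewrite 1 [ih h.le]
    abel

lemma sum_perm_apply_eq {M : Type*} [AddCommMonoid M] (f : Fin n → M) (j k : Fin n) :
    ∑ τ : Equiv.Perm (Fin n), f (τ j) = ∑ τ : Equiv.Perm (Fin n), f (τ k) := by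
  rw [← Equiv.sum_comp (Equiv.mulRight (Equiv.swap j k))]
  simp

lemma sum_perm_norm_sq (a : Fin n → E) (j : Fin n) :
    ∑ τ : Equiv.Perm (Fin n), ‖a (τ j)‖ ^ 2
      = (n.factorial : ℝ) * ((n : ℝ)⁻¹ * ∑ i, ‖a i‖ ^ 2) := by
  have hn : (n : ℝ) ≠ 0 := by
    have := j.pos
    positivity
  have h1 : ∑ k : Fin n, ∑ τ : Equiv.Perm (Fin n), ‖a (τ k)‖ ^ 2
      = n * ∑ τ : Equiv.Perm (Fin n), ‖a (τ j)‖ ^ 2 := by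
    rw [sum_congr rfl fun k _ => sum_perm_apply_eq (fun i => ‖a i‖ ^ 2) k j]
    simp
  rw [sum_comm] at h1
  have h2 : ∀ τ : Equiv.Perm (Fin n), ∑ k, ‖a (τ k)‖ ^ 2 = ∑ i, ‖a i‖ ^ 2 :=
    fun τ => Equiv.sum_comp τ fun i => ‖a i‖ ^ 2
  rw [sum_congr rfl fun τ _ => h2 τ] at h1
  simp only [sum_const, card_univ, Fintype.card_perm, Fintype.card_fin, nsmul_eq_mul] at h1
  field_simp
  linarith

/-- Distinct draws without replacement from a centred population are negatively correlated. -/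
lemma sum_perm_inner_nonpos [InnerProductSpace ℝ E] (a : Fin n → E) (ha : ∑ i, a i = 0)
    {j k : Fin n} (hjk : j ≠ k) :
    ∑ τ : Equiv.Perm (Fin n), ⟪a (τ j), a (τ k)⟫ ≤ 0 := by
  have hsym : ∀ m ∈ univ.erase j, ∑ τ : Equiv.Perm (Fin n), ⟪a (τ j), a (τ m)⟫
      = ∑ τ : Equiv.Perm (Fin n), ⟪a (τ j), a (τ k)⟫ := by
    intro m hm
    rw [← Equiv.sum_comp (Equiv.mulRight (Equiv.swap m k))]
    simp [Equiv.swap_apply_of_ne_of_ne (ne_of_mem_erase hm).symm hjk]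
  have h0 : ∑ m, ∑ τ : Equiv.Perm (Fin n), ⟪a (τ j), a (τ m)⟫ = 0 := by
    rw [sum_comm]
    refine sum_eq_zero fun τ _ => ?_
    rw [← inner_sum, Equiv.sum_comp τ a, ha, inner_zero_right]
  rw [← add_sum_erase univ _ (mem_univ j), sum_congr rfl hsym, sum_const, nsmul_eq_mul] at h0
  have hd : 0 ≤ ∑ τ : Equiv.Perm (Fin n), ⟪a (τ j), a (τ j)⟫ :=
    sum_nonneg fun τ _ => real_inner_self_nonneg
  have hc : (0 : ℝ) < (univ.erase j).card := by
    exact_mod_cast card_pos.2 ⟨k, mem_erase.2 ⟨hjk.symm, mem_univ k⟩⟩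
  by_contra! hpos
  nlinarith [mul_pos hc hpos]

lemma sum_perm_norm_sum_sq_le [InnerProductSpace ℝ E] (a : Fin n → E) (ha : ∑ i, a i = 0)
    (s : Finset (Fin n)) :
    ∑ τ : Equiv.Perm (Fin n), ‖∑ j ∈ s, a (τ j)‖ ^ 2
      ≤ s.card * ((n.factorial : ℝ) * ((n : ℝ)⁻¹ * ∑ i, ‖a i‖ ^ 2)) := by
  have hexp : ∀ τ : Equiv.Perm (Fin n), ‖∑ j ∈ s, a (τ j)‖ ^ 2
      = ∑ j ∈ s, ∑ k ∈ s, ⟪a (τ j), a (τ k)⟫ := by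
    intro τ
    rw [← real_inner_self_eq_norm_sq, sum_inner]
    exact sum_congr rfl fun j _ => inner_sum _ _ _
  rw [sum_congr rfl fun τ _ => hexp τ, sum_comm, ← nsmul_eq_mul, ← sum_const]
  refine sum_le_sum fun j hj => ?_
  rw [sum_comm, ← add_sum_erase s _ hj, ← sum_perm_norm_sq a j]
  have h1 : ∑ k ∈ s.erase j, ∑ τ : Equiv.Perm (Fin n), ⟪a (τ j), a (τ k)⟫ ≤ 0 :=
    sum_nonpos fun k hk => sum_perm_inner_nonpos a ha (ne_of_mem_erase hk).symm
  simp only [real_inner_self_eq_norm_sq]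
  linarith

lemma sum_fin_val_le (n : ℕ) : ∑ i : Fin n, ((i : ℕ) : ℝ) ≤ (n : ℝ) ^ 2 / 2 := by
  rw [Fin.sum_univ_eq_sum_range (fun i => (i : ℝ))]
  induction n with
  | zero => simp
  | succ n ih =>
    rw [sum_range_succ]
    push_cast
    nlinarith

/-- The summed norms of the prefix sums of a sample drawn without replacement. -/
noncomputable def prefixNorms (a : Fin n → E) (τ : Equiv.Perm (Fin n)) : ℝ :=
  ∑ i : Fin n, ‖∑ j ∈ firstIndices n i, a (τ j)‖

lemma prefixNorms_nonneg (a : Fin n → E) (τ : Equiv.Perm (Fin n)) : 0 ≤ prefixNorms a τ :=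
  sum_nonneg fun _ _ => norm_nonneg _

lemma sum_perm_prefixNorms_sq_le [InnerProductSpace ℝ E] (a : Fin n → E) (ha : ∑ i, a i = 0) :
    ∑ τ : Equiv.Perm (Fin n), prefixNorms a τ ^ 2
      ≤ (n.factorial : ℝ) * ((n : ℝ) ^ 3 / 2 * ((n : ℝ)⁻¹ * ∑ i, ‖a i‖ ^ 2)) := by
  set σ2 := (n : ℝ)⁻¹ * ∑ i, ‖a i‖ ^ 2 with hσ
  have hσ0 : 0 ≤ σ2 := by positivity
  calc ∑ τ : Equiv.Perm (Fin n), prefixNorms a τ ^ 2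
      ≤ ∑ τ : Equiv.Perm (Fin n),
          (n : ℝ) * ∑ i : Fin n, ‖∑ j ∈ firstIndices n i, a (τ j)‖ ^ 2 := by
        refine sum_le_sum fun τ _ => ?_
        simpa [prefixNorms] using sq_sum_le_card_mul_sum_sq (s := (univ : Finset (Fin n)))
          (f := fun i : Fin n => ‖∑ j ∈ firstIndices n i, a (τ j)‖)
    _ = (n : ℝ) * ∑ i : Fin n, ∑ τ : Equiv.Perm (Fin n),
          ‖∑ j ∈ firstIndices n i, a (τ j)‖ ^ 2 := by
        rw [← mul_sum, sum_comm]
    _ ≤ (n : ℝ) * ∑ i : Fin n, ((i : ℕ) : ℝ) * ((n.factorial : ℝ) * σ2) := by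
        gcongr with i
        simpa [card_firstIndices] using sum_perm_norm_sum_sq_le a ha (firstIndices n i)
    _ ≤ (n : ℝ) * ((n : ℝ) ^ 2 / 2 * ((n.factorial : ℝ) * σ2)) := by
        rw [← sum_mul]
        gcongr
        exact sum_fin_val_le n
    _ = _ := by ring

end WithoutReplacement

section Epoch

open Finset

variable {E : Type*} [NormedAddCommGroup E] [InnerProductSpace ℝ E] {n : ℕ}
  {ω : Fin n → E → E} {l μ α : ℝ} {ν : E → E} {zs : E}

lemma norm_average_sub_le (hn : 1 ≤ n)
    (hlip : ∀ (i : Fin n) (z₁ z₂ : E), ‖ω i z₁ - ω i z₂‖ ≤ l * ‖z₁ - z₂‖)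
    (hν : ∀ z, ν z = (n : ℝ)⁻¹ • ∑ i, ω i z) (z₁ z₂ : E) :
    ‖ν z₁ - ν z₂‖ ≤ l * ‖z₁ - z₂‖ := by
  have hn0 : (0 : ℝ) < n := by exact_mod_cast hn
  rw [hν, hν, ← smul_sub, ← sum_sub_distrib, norm_smul, norm_inv, Real.norm_natCast,
    inv_mul_le_iff₀ hn0]
  calc ‖∑ i, (ω i z₁ - ω i z₂)‖ ≤ ∑ i : Fin n, l * ‖z₁ - z₂‖ :=
        norm_sum_le_of_le _ fun i _ => hlip i _ _
    _ = n * (l * ‖z₁ - z₂‖) := by simp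

/-- The total drift within an epoch, bounded by the prefix sums of the gradients at the root. -/
lemma sum_norm_gdaStep_sub_le (hl : 0 ≤ l) (hα : 0 ≤ α) (hstep : n * α * l ≤ 1 / 5)
    (hlip : ∀ (i : Fin n) (z₁ z₂ : E), ‖ω i z₁ - ω i z₂‖ ≤ l * ‖z₁ - z₂‖)
    (τ : Equiv.Perm (Fin n)) (z zs : E) :
    ∑ i : Fin n, ‖gdaStep ω α τ z i - z‖
      ≤ 5 / 4 * (α * l * (n ^ 2 / 2) * ‖z - zs‖
          + α * prefixNorms (fun i => ω i zs) τ) := by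
  set D := ∑ i : Fin n, ‖gdaStep ω α τ z i - z‖ with hD
  have hD0 : 0 ≤ D := sum_nonneg fun _ _ => norm_nonneg _
  have hi : ∀ i : Fin n, ‖gdaStep ω α τ z i - z‖
      ≤ α * (l * (D + (i : ℕ) * ‖z - zs‖))
        + α * ‖∑ j ∈ firstIndices n i, ω (τ j) zs‖ := by
    intro i
    have h1 : gdaStep ω α τ z i - z
        = -(α • (∑ j ∈ firstIndices n i, (ω (τ j) (gdaStep ω α τ z j) - ω (τ j) zs)
          + ∑ j ∈ firstIndices n i, ω (τ j) zs)) := by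
      rw [← sum_add_distrib, gdaStep_eq_sub_sum ω α τ z i.2.le]
      simp
    rw [h1, norm_neg, norm_smul, Real.norm_of_nonneg hα, ← mul_add]
    refine mul_le_mul_of_nonneg_left ((norm_add_le _ _).trans ?_) hα
    gcongr
    calc ‖∑ j ∈ firstIndices n i, (ω (τ j) (gdaStep ω α τ z j) - ω (τ j) zs)‖
        ≤ ∑ j ∈ firstIndices n i, l * (‖gdaStep ω α τ z j - z‖ + ‖z - zs‖) := by
          refine norm_sum_le_of_le _ fun j _ => (hlip _ _ _).trans ?_
          gcongr
          exact norm_sub_le_norm_sub_add_norm_sub _ _ _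
      _ = l * (∑ j ∈ firstIndices n i, ‖gdaStep ω α τ z j - z‖ + (i : ℕ) * ‖z - zs‖) := by
          rw [← mul_sum, sum_add_distrib, sum_const, card_firstIndices, nsmul_eq_mul]
      _ ≤ l * (D + (i : ℕ) * ‖z - zs‖) := by
          gcongr
          exact sum_le_sum_of_subset_of_nonneg (filter_subset _ _) fun _ _ _ => norm_nonneg _
  have hsum : D ≤ α * (l * (n * D + n ^ 2 / 2 * ‖z - zs‖))
      + α * prefixNorms (fun i => ω i zs) τ := by
    calc D ≤ ∑ i : Fin n, (α * (l * (D + (i : ℕ) * ‖z - zs‖))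
          + α * ‖∑ j ∈ firstIndices n i, ω (τ j) zs‖) := sum_le_sum fun i _ => hi i
      _ = α * (l * (n * D + (∑ i : Fin n, ((i : ℕ) : ℝ)) * ‖z - zs‖))
          + α * prefixNorms (fun i => ω i zs) τ := by
        rw [sum_add_distrib, ← mul_sum, ← mul_sum, ← mul_sum, sum_add_distrib, ← sum_mul]
        simp [prefixNorms]
      _ ≤ _ := by
        gcongr
        exact sum_fin_val_le n
  have := mul_le_mul_of_nonneg_right hstep hD0
  linarith

/-- A full step along a strongly monotone Lipschitz operator contracts towards its root. -/
lemma norm_sub_smul_le {h : ℝ} (hμ : 0 < μ) (hl : μ ≤ l) (hh : 0 ≤ h)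
    (hstep : h * l ^ 2 ≤ μ / 5)
    (hνlip : ∀ z, ‖ν z - ν zs‖ ≤ l * ‖z - zs‖)
    (hmono : ∀ z₁ z₂, ⟪ν z₁ - ν z₂, z₁ - z₂⟫ ≥ μ * ‖z₁ - z₂‖ ^ 2)
    (hzs : ν zs = 0) (z : E) :
    ‖z - zs - h • ν z‖ ≤ (1 - 9 / 10 * (h * μ)) * ‖z - zs‖ := by
  have hx : h * μ ≤ 1 / 5 := by
    have h1 : μ * (h * μ) ≤ μ * (1 / 5) := by
      have : h * μ ^ 2 ≤ h * l ^ 2 := by gcongr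
      linarith
    exact le_of_mul_le_mul_left h1 hμ
  have hm := hmono z zs
  have hL := hνlip z
  rw [hzs, sub_zero] at hm hL
  refine le_of_sq_le_sq ?_ (mul_nonneg (by linarith) (norm_nonneg _))
  rw [norm_sub_sq_real, inner_smul_right, norm_smul, Real.norm_of_nonneg hh, real_inner_comm]
  have h2 : ‖ν z‖ ^ 2 ≤ l ^ 2 * ‖z - zs‖ ^ 2 := by
    rw [← mul_pow]
    gcongr
  have h3 : h * (μ * ‖z - zs‖ ^ 2) ≤ h * ⟪ν z, z - zs⟫ := mul_le_mul_of_nonneg_left hm hh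
  have h4 : h ^ 2 * ‖ν z‖ ^ 2 ≤ h ^ 2 * (l ^ 2 * ‖z - zs‖ ^ 2) := by gcongr
  have h5 : h * ‖z - zs‖ ^ 2 * (h * l ^ 2) ≤ h * ‖z - zs‖ ^ 2 * (μ / 5) := by gcongr
  have h6 : 0 ≤ (h * μ) ^ 2 * ‖z - zs‖ ^ 2 := by positivity
  linarith

lemma add_sq_le_of_contraction {x u w b : ℝ} (hx : 0 < x) (hx' : x ≤ 1 / 5) (hw : 0 ≤ w)
    (h : w ≤ (1 - 31 / 40 * x) * u + b) :
    w ^ 2 ≤ (1 - x) * u ^ 2 + 2 / x * b ^ 2 := by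
  have h1 : w ^ 2 ≤ ((1 - 31 / 40 * x) * u + b) ^ 2 := by gcongr
  refine h1.trans ?_
  have h2 : x * ((1 - 31 / 40 * x) * u + b) ^ 2 ≤ x * ((1 - x) * u ^ 2) + 2 * b ^ 2 := by
    have hc : 0 ≤ x ^ 2 * (1 / 10 - 161 / 800 * x) * u ^ 2 := by
      have : 0 ≤ 1 / 10 - 161 / 800 * x := by linarith
      positivity
    have hs := sq_nonneg ((2 - x) * b - x * (1 - 31 / 40 * x) * u)
    refine le_of_mul_le_mul_left (a := 2 - x) ?_ (by linarith)
    linarith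
  have h3 : (1 - x) * u ^ 2 + 2 / x * b ^ 2 = (x * ((1 - x) * u ^ 2) + 2 * b ^ 2) / x := by
    field_simp
  rw [h3, le_div_iff₀ hx]
  linarith

/-- Progress over one epoch for a fixed permutation. -/
lemma norm_gdaStep_sub_sq_le (hn : 1 ≤ n) (hμ : 0 < μ) (hl : μ ≤ l)
    (hα : 0 < α) (hstep : n * α * l ^ 2 ≤ μ / 5)
    (hlip : ∀ (i : Fin n) (z₁ z₂ : E), ‖ω i z₁ - ω i z₂‖ ≤ l * ‖z₁ - z₂‖)
    (hν : ∀ z, ν z = (n : ℝ)⁻¹ • ∑ i, ω i z)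
    (hmono : ∀ z₁ z₂, ⟪ν z₁ - ν z₂, z₁ - z₂⟫ ≥ μ * ‖z₁ - z₂‖ ^ 2)
    (hzs : ν zs = 0) (τ : Equiv.Perm (Fin n)) (z : E) :
    ‖gdaStep ω α τ z n - zs‖ ^ 2
      ≤ (1 - n * α * μ) * ‖z - zs‖ ^ 2
        + 2 / (n * α * μ) * (5 / 4 * α ^ 2 * l * prefixNorms (fun i => ω i zs) τ) ^ 2 := by
  have hn0 : (0 : ℝ) < n := by exact_mod_cast hn
  have hl0 : 0 < l := hμ.trans_le hl
  have hnl : n * α * l ≤ 1 / 5 := by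
    refine le_of_mul_le_mul_right ?_ hl0
    linarith
  have hx : n * α * μ ≤ 1 / 5 := le_trans (by gcongr) hnl
  refine add_sq_le_of_contraction (by positivity) hx (norm_nonneg _) ?_
  have hsum : ∑ j, ω (τ j) z = (n : ℝ) • ν z := by
    rw [Equiv.sum_comp τ fun i => ω i z, hν, smul_inv_smul₀ hn0.ne']
  have hdec : gdaStep ω α τ z n - zs = (z - zs - (n * α) • ν z)
      - α • ∑ j, (ω (τ j) (gdaStep ω α τ z j) - ω (τ j) z) := by
    rw [gdaStep_eq_sub_sum ω α τ z le_rfl, sum_sub_distrib, hsum]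
    simp only [firstIndices, Fin.is_lt, filter_true]
    rw [smul_sub, smul_smul, mul_comm (n : ℝ) α]
    abel
  have hcontr := norm_sub_smul_le hμ hl (by positivity) hstep
    (fun z => norm_average_sub_le hn hlip hν z zs) hmono hzs z
  have hdrift : ‖∑ j, (ω (τ j) (gdaStep ω α τ z j) - ω (τ j) z)‖
      ≤ l * ∑ j : Fin n, ‖gdaStep ω α τ z j - z‖ := by
    rw [mul_sum]
    exact norm_sum_le_of_le _ fun j _ => hlip _ _ _
  have hD := sum_norm_gdaStep_sub_le hl0.le hα.le hnl hlip τ z zs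
  have hquad : n * α * ‖z - zs‖ * (n * α * l ^ 2) ≤ n * α * ‖z - zs‖ * (μ / 5) := by gcongr
  calc ‖gdaStep ω α τ z n - zs‖
      ≤ (1 - 9 / 10 * (n * α * μ)) * ‖z - zs‖
        + α * (l * (5 / 4 * (α * l * (n ^ 2 / 2) * ‖z - zs‖
          + α * prefixNorms (fun i => ω i zs) τ))) := by
        rw [hdec]
        refine (norm_sub_le _ _).trans (add_le_add hcontr ?_)
        rw [norm_smul, Real.norm_of_nonneg hα.le]
        gcongr
        exact hdrift.trans (by gcongr)
    _ ≤ _ := by linarith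

/-- Progress over one epoch, averaged over the permutations. -/
lemma sum_perm_norm_gdaStep_sub_sq_le (hn : 1 ≤ n) (hμ : 0 < μ) (hl : μ ≤ l)
    (hα : 0 < α) (hstep : n * α * l ^ 2 ≤ μ / 5)
    (hlip : ∀ (i : Fin n) (z₁ z₂ : E), ‖ω i z₁ - ω i z₂‖ ≤ l * ‖z₁ - z₂‖)
    (hν : ∀ z, ν z = (n : ℝ)⁻¹ • ∑ i, ω i z)
    (hmono : ∀ z₁ z₂, ⟪ν z₁ - ν z₂, z₁ - z₂⟫ ≥ μ * ‖z₁ - z₂‖ ^ 2)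
    (hzs : ν zs = 0) (z : E) :
    ∑ τ : Equiv.Perm (Fin n), ‖gdaStep ω α τ z n - zs‖ ^ 2
      ≤ (n.factorial : ℝ) * ((1 - n * α * μ) * ‖z - zs‖ ^ 2
        + 25 / 16 * (α ^ 3 * l ^ 2 * n ^ 2 * ((n : ℝ)⁻¹ * ∑ i, ‖ω i zs‖ ^ 2) / μ)) := by
  have hn0 : (0 : ℝ) < n := by exact_mod_cast hn
  have ha : ∑ i, ω i zs = 0 := by
    have h := hν zs
    rw [hzs] at h
    exact (smul_eq_zero.1 h.symm).resolve_left (inv_ne_zero hn0.ne')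
  set σ2 := (n : ℝ)⁻¹ * ∑ i, ‖ω i zs‖ ^ 2
  calc ∑ τ : Equiv.Perm (Fin n), ‖gdaStep ω α τ z n - zs‖ ^ 2
      ≤ ∑ τ : Equiv.Perm (Fin n), ((1 - n * α * μ) * ‖z - zs‖ ^ 2
        + 2 / (n * α * μ) * (5 / 4 * α ^ 2 * l * prefixNorms (fun i => ω i zs) τ) ^ 2) :=
        sum_le_sum fun τ _ =>
          norm_gdaStep_sub_sq_le hn hμ hl hα hstep hlip hν hmono hzs τ z
    _ = (n.factorial : ℝ) * ((1 - n * α * μ) * ‖z - zs‖ ^ 2)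
        + 2 / (n * α * μ) * ((5 / 4 * α ^ 2 * l) ^ 2
          * ∑ τ : Equiv.Perm (Fin n), prefixNorms (fun i => ω i zs) τ ^ 2) := by
        simp only [mul_pow, sum_add_distrib, sum_const, card_univ, Fintype.card_perm,
          Fintype.card_fin, nsmul_eq_mul, ← mul_sum]
    _ ≤ (n.factorial : ℝ) * ((1 - n * α * μ) * ‖z - zs‖ ^ 2)
        + 2 / (n * α * μ) * ((5 / 4 * α ^ 2 * l) ^ 2
          * ((n.factorial : ℝ) * ((n : ℝ) ^ 3 / 2 * σ2))) := by
        gcongr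
        exact sum_perm_prefixNorms_sq_le _ ha
    _ = _ := by
        field_simp
        ring

end Epoch

section Epochs

open Finset

variable {E : Type*} [NormedAddCommGroup E] [NormedSpace ℝ E] {n : ℕ}

lemma gdaEpochs_congr (ω : Fin n → E → E) (α : ℝ) {τs τs' : ℕ → Equiv.Perm (Fin n)} (z0 : E)
    {m : ℕ} (h : ∀ k < m, τs k = τs' k) :
    gdaEpochs ω α τs z0 m = gdaEpochs ω α τs' z0 m := by
  induction m with
  | zero => rfl
  | succ m ih =>
    simp only [gdaEpochs]
    rw [ih fun k hk => h k (hk.trans m.lt_succ_self), h m m.lt_succ_self]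

/-- If one epoch satisfies an affine recursion on average, then so do `m` epochs. -/
lemma average_gdaEpochs_le (ω : Fin n → E → E) (α : ℝ) (zs z0 : E) {q N B : ℝ}
    (hq : 0 ≤ q) (hB : q * B + N ≤ B) (hB0 : 0 ≤ B)
    (hepoch : ∀ z, ∑ τ : Equiv.Perm (Fin n), ‖gdaStep ω α τ z n - zs‖ ^ 2
      ≤ (n.factorial : ℝ) * (q * ‖z - zs‖ ^ 2 + N)) (m : ℕ) :
    ((n.factorial : ℝ) ^ m)⁻¹ * ∑ τ : Fin m → Equiv.Perm (Fin n),
        ‖gdaEpochs ω α (fun k => if h : k < m then τ ⟨k, h⟩ else 1) z0 m - zs‖ ^ 2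
      ≤ q ^ m * ‖z0 - zs‖ ^ 2 + B := by
  have hf : (0 : ℝ) < n.factorial := by exact_mod_cast n.factorial_pos
  induction m with
  | zero => simpa [gdaEpochs] using hB0
  | succ m ih =>
    rw [inv_mul_le_iff₀ (by positivity)] at ih ⊢
    set e := fun τ : Fin m → Equiv.Perm (Fin n) =>
      gdaEpochs ω α (fun k => if h : k < m then τ ⟨k, h⟩ else 1) z0 m with he
    have hsplit : ∑ τ : Fin (m + 1) → Equiv.Perm (Fin n),
        ‖gdaEpochs ω α (fun k => if h : k < m + 1 then τ ⟨k, h⟩ else 1) z0 (m + 1) - zs‖ ^ 2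
        = ∑ τ : Fin m → Equiv.Perm (Fin n), ∑ π : Equiv.Perm (Fin n),
            ‖gdaStep ω α π (e τ) n - zs‖ ^ 2 := by
      rw [← Equiv.sum_comp (Fin.snocEquiv fun _ => Equiv.Perm (Fin n)),
        Fintype.sum_prod_type_right]
      refine sum_congr rfl fun τ _ => sum_congr rfl fun π _ => ?_
      have h1 : ∀ k < m,
          (fun k => if h : k < m + 1 then
            (Fin.snocEquiv fun _ => Equiv.Perm (Fin n)) (π, τ) ⟨k, h⟩ else 1) k
          = (fun k => if h : k < m then τ ⟨k, h⟩ else 1) k := by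
        intro k hk
        simp [Fin.snocEquiv, Fin.snoc, hk, hk.trans m.lt_succ_self]
      simp only [gdaEpochs]
      rw [gdaEpochs_congr ω α z0 h1]
      simp [Fin.snocEquiv, Fin.snoc, he]
    rw [hsplit]
    calc ∑ τ : Fin m → Equiv.Perm (Fin n), ∑ π : Equiv.Perm (Fin n),
            ‖gdaStep ω α π (e τ) n - zs‖ ^ 2
        ≤ ∑ τ : Fin m → Equiv.Perm (Fin n),
            (n.factorial : ℝ) * (q * ‖e τ - zs‖ ^ 2 + N) := sum_le_sum fun τ _ => hepoch _
      _ = (n.factorial : ℝ) * (q * (∑ τ, ‖e τ - zs‖ ^ 2) + (n.factorial : ℝ) ^ m * N) := by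
          rw [← mul_sum, sum_add_distrib, ← mul_sum]
          simp [Fintype.card_perm]
      _ ≤ (n.factorial : ℝ) * (q * ((n.factorial : ℝ) ^ m * (q ^ m * ‖z0 - zs‖ ^ 2 + B))
            + (n.factorial : ℝ) ^ m * N) := by gcongr
      _ = (n.factorial : ℝ) ^ (m + 1) * (q ^ (m + 1) * ‖z0 - zs‖ ^ 2 + (q * B + N)) := by ring
      _ ≤ _ := by gcongr

end Epochs

/-- GDA with Random Reshuffling, with the tuned step-size
`α = min{μ/(5nl²), (2/(μnK))·log(‖ν(z₀)‖√n·K/μ)}`: averaging over all `(n!)^K` tuples of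
permutations,
`E‖z^{K+1}₀ − z*‖² ≤ 2e^{−K/(5κ²)}‖z₀ − z*‖² + (2μ² + 8κ²σ*²log³(‖ν(z₀)‖√n·K/μ))/(μ²nK²)`,
where `κ = l/μ`. -/
theorem stmt_19
    {E : Type*} [NormedAddCommGroup E] [InnerProductSpace ℝ E] [FiniteDimensional ℝ E]
    (n : ℕ) (hn : 1 ≤ n) (ω : Fin n → E → E) (l μ : ℝ) (hμ : 0 < μ) (hμl : μ ≤ l)
    (hlip : ∀ (i : Fin n) (z₁ z₂ : E), ‖ω i z₁ - ω i z₂‖ ≤ l * ‖z₁ - z₂‖)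
    (ν : E → E) (hν : ∀ z, ν z = (n : ℝ)⁻¹ • ∑ i, ω i z)
    (hmono : ∀ z₁ z₂, ⟪ν z₁ - ν z₂, z₁ - z₂⟫ ≥ μ * ‖z₁ - z₂‖ ^ 2)
    (zs : E) (hzs : ν zs = 0)
    (σ2 : ℝ) (hσ2 : σ2 = (n : ℝ)⁻¹ * ∑ i, ‖ω i zs‖ ^ 2)
    (z0 : E) (K : ℕ) (hK : 1 ≤ K)
    (hbig : ‖ν z0‖ * Real.sqrt n * K ≥ Real.exp 1 * μ)
    (α : ℝ)
    (hα : α = min (μ / (5 * n * l ^ 2))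
        (2 / (μ * n * K) * Real.log (‖ν z0‖ * Real.sqrt n * K / μ))) :
    ((n.factorial : ℝ) ^ K)⁻¹ *
        ∑ τ : Fin K → Equiv.Perm (Fin n),
          ‖gdaEpochs ω α (fun k => if h : k < K then τ ⟨k, h⟩ else 1) z0 K - zs‖ ^ 2
      ≤ 2 * Real.exp (-((K : ℝ) / (5 * (l / μ) ^ 2))) * ‖z0 - zs‖ ^ 2 +
          (2 * μ ^ 2 + 8 * (l / μ) ^ 2 * σ2 *
              Real.log (‖ν z0‖ * Real.sqrt n * K / μ) ^ 3) /
            (μ ^ 2 * n * K ^ 2) := by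
  have hn0 : (0 : ℝ) < n := by exact_mod_cast hn
  have hK0 : (0 : ℝ) < K := by exact_mod_cast hK
  have hl0 : 0 < l := hμ.trans_le hμl
  have hσ0 : 0 ≤ σ2 := by rw [hσ2]; positivity
  set R := ‖ν z0‖ * Real.sqrt n * K / μ with hR
  have hRe : Real.exp 1 ≤ R := by rw [hR, le_div_iff₀ hμ]; exact hbig
  have hR0 : 0 < R := (Real.exp_pos 1).trans_le hRe
  have hL : 1 ≤ Real.log R := (Real.le_log_iff_exp_le hR0).2 hRe
  set L := Real.log R with hLdef
  have hα0 : 0 < α := by rw [hα]; exact lt_min (by positivity) (by positivity)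
  have hα1 : α ≤ μ / (5 * n * l ^ 2) := hα ▸ min_le_left _ _
  have hα2 : α ≤ 2 / (μ * n * K) * L := hα ▸ min_le_right _ _
  have hstep : n * α * l ^ 2 ≤ μ / 5 := by
    calc n * α * l ^ 2 ≤ n * (μ / (5 * n * l ^ 2)) * l ^ 2 := by gcongr
      _ = μ / 5 := by field_simp
  have hx : n * α * μ ≤ 1 := by
    refine le_of_mul_le_mul_right ?_ hμ
    calc n * α * μ * μ = n * α * μ ^ 2 := by ring
      _ ≤ n * α * l ^ 2 := by gcongr
      _ ≤ 1 * μ := by linarith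
  have hmain := average_gdaEpochs_le ω α zs z0 (q := 1 - n * α * μ)
    (N := 25 / 16 * (α ^ 3 * l ^ 2 * n ^ 2 * σ2 / μ))
    (B := 25 / 16 * (α ^ 2 * l ^ 2 * n * σ2 / μ ^ 2)) (by linarith)
    (le_of_eq (by field_simp; ring)) (by positivity)
    (fun z => by
      rw [hσ2]
      exact sum_perm_norm_gdaStep_sub_sq_le hn hμ hμl hα0 hstep hlip hν hmono hzs z) K
  have hpow : (1 - n * α * μ) ^ K ≤ Real.exp (-(n * α * μ * K)) := by
    calc (1 - n * α * μ) ^ K ≤ Real.exp (-(n * α * μ)) ^ K :=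
          pow_le_pow_left₀ (by linarith) (Real.one_sub_le_exp_neg _) K
      _ = Real.exp (-(n * α * μ * K)) := by
          rw [← Real.exp_nat_mul]
          congr 1
          ring
  have hroot : μ * ‖z0 - zs‖ ≤ ‖ν z0‖ := by
    have h1 := hmono z0 zs
    rw [hzs, sub_zero] at h1
    have h2 := real_inner_le_norm (ν z0) (z0 - zs)
    rcases (norm_nonneg (z0 - zs)).eq_or_lt with h0 | h0
    · simp [← h0]
    · refine le_of_mul_le_mul_right ?_ h0
      linarith
  have hinit : Real.exp (-(n * α * μ * K)) * ‖z0 - zs‖ ^ 2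
      ≤ Real.exp (-((K : ℝ) / (5 * (l / μ) ^ 2))) * ‖z0 - zs‖ ^ 2 + 1 / (n * K ^ 2) := by
    rcases min_choice (μ / (5 * n * l ^ 2)) (2 / (μ * n * K) * L) with hc | hc
    · have : n * α * μ * K = (K : ℝ) / (5 * (l / μ) ^ 2) := by
        rw [hα, hc]
        field_simp
      rw [this]
      exact le_add_of_nonneg_right (by positivity)
    · have h1 : n * α * μ * K = 2 * L := by
        rw [hα, hc]
        field_simp
      have h2 : Real.exp (-(2 * L)) = (R ^ 2)⁻¹ := by
        rw [Real.exp_neg, two_mul, Real.exp_add, hLdef, Real.exp_log hR0, sq]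
      have h3 : R ^ 2 = ‖ν z0‖ ^ 2 * n * K ^ 2 / μ ^ 2 := by
        rw [hR, div_pow, mul_pow, mul_pow, Real.sq_sqrt hn0.le]
      have h4 : (R ^ 2)⁻¹ * ‖z0 - zs‖ ^ 2 ≤ 1 / (n * K ^ 2) := by
        rw [inv_mul_le_iff₀ (by positivity), h3]
        have h5 : (μ * ‖z0 - zs‖) ^ 2 ≤ ‖ν z0‖ ^ 2 := by gcongr
        calc ‖z0 - zs‖ ^ 2 = (μ * ‖z0 - zs‖) ^ 2 / μ ^ 2 := by field_simp
          _ ≤ ‖ν z0‖ ^ 2 / μ ^ 2 := by gcongr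
          _ = _ := by field_simp
      rw [h1, h2]
      exact h4.trans (le_add_of_nonneg_left (by positivity))
  have hnoise : 25 / 16 * (α ^ 2 * l ^ 2 * n * σ2 / μ ^ 2)
      ≤ 8 * (l / μ) ^ 2 * σ2 * L ^ 3 / (μ ^ 2 * n * K ^ 2) := by
    calc 25 / 16 * (α ^ 2 * l ^ 2 * n * σ2 / μ ^ 2)
        ≤ 25 / 16 * ((2 / (μ * n * K) * L) ^ 2 * l ^ 2 * n * σ2 / μ ^ 2) := by gcongr
      _ = 25 / 4 * ((l / μ) ^ 2 * σ2 * L ^ 2 / (μ ^ 2 * n * K ^ 2)) := by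
          field_simp
          ring
      _ ≤ 8 * ((l / μ) ^ 2 * σ2 * L ^ 3 / (μ ^ 2 * n * K ^ 2)) := by
          gcongr
          · norm_num
          · norm_num
      _ = _ := by ring
  have hsplit : (2 * μ ^ 2 + 8 * (l / μ) ^ 2 * σ2 * L ^ 3) / (μ ^ 2 * n * K ^ 2)
      = 2 * (1 / (n * K ^ 2)) + 8 * (l / μ) ^ 2 * σ2 * L ^ 3 / (μ ^ 2 * n * K ^ 2) := by
    rw [add_div]
    congr 1
    field_simp
  rw [hsplit]
  have h1 : 0 ≤ Real.exp (-((K : ℝ) / (5 * (l / μ) ^ 2))) * ‖z0 - zs‖ ^ 2 := by positivity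
  have h2 : (0 : ℝ) ≤ 1 / (n * K ^ 2) := by positivity
  have h3 := mul_le_mul_of_nonneg_right hpow (sq_nonneg ‖z0 - zs‖)
  linarith
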